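/- Let K be a field. The set O is a covering of P₃(K) — i.e., every nonzero vector of K⁴ lies in some member of O — if and only if the characteristic of K is not 3 and every element of K has a cube root in K. -/

import Mathlib

/-- The Cayley cubic form `f(x₀,x₁,x₂,x₃) = x₀x₁x₂ − x₁³ − x₀²x₃`. -/
def cayleyF {K : Type*} [Field K] (x : Fin 4 → K) : K :=
  x 0 * x 1 * x 2 - (x 1) ^ 3 - (x 0) ^ 2 * x 3

/-- The affine point `P(u₁,u₂)` of the Cayley surface. -/
def cayleyP (K : Type*) [Field K] (u₁ u₂ : K) : Fin 4 → K :=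
  ![1, u₁, u₂, u₁ * u₂ - u₁ ^ 3]

/-- The direction vector `d(u₁,u₂) = (0,1,3u₁,u₂)`. -/
def cayleyD (K : Type*) [Field K] (u₁ u₂ : K) : Fin 4 → K :=
  ![0, 1, 3 * u₁, u₂]

/-- The osculating tangent `ℓ(u₁,u₂) = span{P(u₁,u₂), d(u₁,u₂)}`. -/
def oscTang (K : Type*) [Field K] (u₁ u₂ : K) : Submodule K (Fin 4 → K) :=
  Submodule.span K {cayleyP K u₁ u₂, cayleyD K u₁ u₂}

/-- The line `g∞ = span{(0,0,1,0), (0,0,0,1)}`. -/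
def gInf (K : Type*) [Field K] : Submodule K (Fin 4 → K) :=
  Submodule.span K {![0, 0, 1, 0], ![0, 0, 0, 1]}

/-- The Betten–Walker line set `O`: all osculating tangents together with `g∞`. -/
def BWset (K : Type*) [Field K] : Set (Submodule K (Fin 4 → K)) :=
  {ℓ | ∃ u₁ u₂ : K, ℓ = oscTang K u₁ u₂} ∪ {gInf K}

/-!
The restriction of the Cayley form to an osculating tangent has a triple zero at the point of
contact: `f(a P + b d) = -b³`. Off the plane `x₀ = 0` a point is determined by its first three
coordinates together with the value of `f`, so such a point lies on an osculating tangent exactly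
when `f(x)` is a cube. The plane `x₀ = 0` meets the osculating tangents only in the points
`d(u₁,u₂) = (0,1,3u₁,u₂)`, and these together with `g∞` fill the plane exactly when `3 ≠ 0` in `K`.
-/

section CayleySurface

variable {K : Type*} [Field K]

theorem mem_oscTang_iff {u₁ u₂ : K} {x : Fin 4 → K} :
    x ∈ oscTang K u₁ u₂ ↔ ∃ a b : K, a • cayleyP K u₁ u₂ + b • cayleyD K u₁ u₂ = x :=
  Submodule.mem_span_pair

theorem smul_cayleyP_add_smul_cayleyD (a b u₁ u₂ : K) :
    a • cayleyP K u₁ u₂ + b • cayleyD K u₁ u₂ =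
      ![a, a * u₁ + b, a * u₂ + b * (3 * u₁), a * (u₁ * u₂ - u₁ ^ 3) + b * u₂] := by
  simp [cayleyP, cayleyD]

theorem cayleyF_smul_cayleyP_add_smul_cayleyD (a b u₁ u₂ : K) :
    cayleyF (a • cayleyP K u₁ u₂ + b • cayleyD K u₁ u₂) = -b ^ 3 := by
  rw [smul_cayleyP_add_smul_cayleyD]
  simp only [cayleyF, Matrix.cons_val]
  ring

theorem eq_of_cayleyF_eq {x y : Fin 4 → K} (hy : y 0 ≠ 0) (h0 : x 0 = y 0) (h1 : x 1 = y 1)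
    (h2 : x 2 = y 2) (hf : cayleyF x = cayleyF y) : x = y := by
  have h3 : x 3 = y 3 := by
    simp only [cayleyF, h0, h1, h2] at hf
    exact mul_left_cancel₀ (pow_ne_zero 2 hy) (sub_right_injective hf)
  ext i
  fin_cases i
  exacts [h0, h1, h2, h3]

theorem exists_mem_oscTang_iff_of_apply_zero_ne_zero {x : Fin 4 → K} (hx : x 0 ≠ 0) :
    (∃ u₁ u₂, x ∈ oscTang K u₁ u₂) ↔ ∃ r, r ^ 3 = cayleyF x := by
  simp only [mem_oscTang_iff]
  constructor
  · rintro ⟨u₁, u₂, a, b, rfl⟩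
    exact ⟨-b, by rw [cayleyF_smul_cayleyP_add_smul_cayleyD, Odd.neg_pow (by decide)]⟩
  · rintro ⟨r, hr⟩
    -- `f(x) = -b³` suggests `b = -r`; then `x₁` and `x₂` determine `u₁` and `u₂`.
    let u₁ := (x 1 + r) / x 0
    let u₂ := (x 2 + r * (3 * u₁)) / x 0
    have hu₁ : x 0 * u₁ = x 1 + r := mul_div_cancel₀ _ hx
    have hu₂ : x 0 * u₂ = x 2 + r * (3 * u₁) := mul_div_cancel₀ _ hx
    refine ⟨u₁, u₂, x 0, -r, eq_of_cayleyF_eq hx ?_ ?_ ?_ ?_⟩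
    · simp [cayleyP, cayleyD]
    · simp [cayleyP, cayleyD, hu₁]
    · simp [cayleyP, cayleyD, hu₂]
    · rw [cayleyF_smul_cayleyP_add_smul_cayleyD, ← hr]
      ring

theorem mem_oscTang_iff_of_apply_zero_eq_zero {u₁ u₂ : K} {x : Fin 4 → K} (hx : x 0 = 0) :
    x ∈ oscTang K u₁ u₂ ↔ x 1 * (3 * u₁) = x 2 ∧ x 1 * u₂ = x 3 := by
  simp [mem_oscTang_iff, smul_cayleyP_add_smul_cayleyD, funext_iff, Fin.forall_fin_succ, hx]

theorem exists_mem_oscTang_iff_of_apply_zero_eq_zero {x : Fin 4 → K} (hx0 : x 0 = 0)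
    (hx1 : x 1 ≠ 0) : (∃ u₁ u₂, x ∈ oscTang K u₁ u₂) ↔ ∃ u, 3 * u = x 2 / x 1 := by
  simp only [mem_oscTang_iff_of_apply_zero_eq_zero hx0, exists_and_left, eq_div_iff hx1,
    mul_comm (x 1)]
  exact exists_congr fun _ => and_iff_left ⟨x 3 / x 1, div_mul_cancel₀ _ hx1⟩

theorem mem_gInf_iff {x : Fin 4 → K} : x ∈ gInf K ↔ x 0 = 0 ∧ x 1 = 0 := by
  simp [gInf, Submodule.mem_span_pair, funext_iff, Fin.forall_fin_succ, eq_comm]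

theorem exists_mem_BWset_iff {x : Fin 4 → K} :
    (∃ ℓ ∈ BWset K, x ∈ ℓ) ↔ (∃ u₁ u₂, x ∈ oscTang K u₁ u₂) ∨ x ∈ gInf K := by
  constructor
  · rintro ⟨_, ⟨u₁, u₂, rfl⟩ | rfl, hx⟩
    · exact .inl ⟨u₁, u₂, hx⟩
    · exact .inr hx
  · rintro (⟨u₁, u₂, hx⟩ | hx)
    · exact ⟨_, .inl ⟨u₁, u₂, rfl⟩, hx⟩
    · exact ⟨_, .inr rfl, hx⟩

theorem BWset_covers_affine_part_iff :
    (∀ x : Fin 4 → K, x 0 ≠ 0 → ∃ ℓ ∈ BWset K, x ∈ ℓ) ↔ ∀ a : K, ∃ r : K, r ^ 3 = a := by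
  have covered_iff {x : Fin 4 → K} (hx : x 0 ≠ 0) :
      (∃ ℓ ∈ BWset K, x ∈ ℓ) ↔ ∃ r, r ^ 3 = cayleyF x := by
    simp [exists_mem_BWset_iff, mem_gInf_iff, hx, exists_mem_oscTang_iff_of_apply_zero_ne_zero]
  constructor
  · intro h a
    have hf : cayleyF ![1, 0, 0, -a] = a := by simp [cayleyF]
    have h0 : (![1, 0, 0, -a] : Fin 4 → K) 0 ≠ 0 := one_ne_zero
    simpa only [hf] using (covered_iff h0).1 (h _ h0)
  · exact fun h x hx => (covered_iff hx).2 (h _)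

theorem BWset_covers_plane_at_infinity_iff :
    (∀ x : Fin 4 → K, x 0 = 0 → ∃ ℓ ∈ BWset K, x ∈ ℓ) ↔ (3 : K) ≠ 0 := by
  constructor
  · intro h h3
    have h1 : (![0, 1, 1, 0] : Fin 4 → K) 1 ≠ 0 := one_ne_zero
    obtain h_osc | h_gInf := exists_mem_BWset_iff.1 (h ![0, 1, 1, 0] rfl)
    · simpa [h3] using (exists_mem_oscTang_iff_of_apply_zero_eq_zero rfl h1).1 h_osc
    · exact h1 (mem_gInf_iff.1 h_gInf).2
  · intro h3 x hx0
    rw [exists_mem_BWset_iff, mem_gInf_iff]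
    by_cases hx1 : x 1 = 0
    · exact .inr ⟨hx0, hx1⟩
    · exact .inl ((exists_mem_oscTang_iff_of_apply_zero_eq_zero hx0 hx1).2
        ⟨_, mul_div_cancel₀ _ h3⟩)

end CayleySurface

/-- `O` is a covering of `P₃(K)` iff `char K ≠ 3` and every element of
`K` has a cube root in `K`. -/
theorem bw_covering_iff (K : Type*) [Field K] :
    (∀ x : Fin 4 → K, x ≠ 0 → ∃ ℓ ∈ BWset K, x ∈ ℓ) ↔
      (ringChar K ≠ 3 ∧ ∀ a : K, ∃ r : K, r ^ 3 = a) := by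
  have three_ne_zero_iff : ringChar K ≠ 3 ↔ (3 : K) ≠ 0 :=
    (ringChar.eq_iff.trans (CharP.charP_iff_prime_eq_zero Nat.prime_three)).not
  rw [three_ne_zero_iff, ← BWset_covers_plane_at_infinity_iff, ← BWset_covers_affine_part_iff]
  constructor
  · intro h
    have covers_all (x : Fin 4 → K) : ∃ ℓ ∈ BWset K, x ∈ ℓ := by
      obtain rfl | hx := eq_or_ne x 0
      · exact ⟨gInf K, .inr rfl, zero_mem _⟩
      · exact h x hx
    exact ⟨fun x _ => covers_all x, fun x _ => covers_all x⟩
  · rintro ⟨infinity, affine⟩ x -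
    exact (eq_or_ne (x 0) 0).elim (infinity x) (affine x)
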